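/- On ℓ²(ℤ) with orthonormal basis (φ_j)_{j∈ℤ}, let the mode operator C_n (n ≥ 1 an integer) have Hermitian part R = diag(…,1,1,0,1,1,…) (zero only at j = 0) and skew part with matrix −(i n/2)(δ_{j+1,k} + δ_{j−1,k}). Let Y_n be the identity modified in the (0,1),(1,0) entries to ∓ i/(2n). Then Y_n is self-adjoint with spectrum {1 − 1/(2n), 1, 1 + 1/(2n)}, in particular (1 − 1/(2n))I ≤ Y_n ≤ (1 + 1/(2n))I, and C_n* Y_n + Y_n C_n ≥ 2λ₀ Y_n holds with λ₀ = 1/2 − 1/(6√2) − (1/3)√(7/16 + 1/√8). -/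

import Mathlib

open ContinuousLinearMap
open scoped InnerProductSpace

section HilbertBasisOperators

variable {ι H : Type*} [NormedAddCommGroup H] [InnerProductSpace ℂ H]

/-- Bounded operators that agree on a Hilbert basis are equal. -/
theorem HilbertBasis.continuousLinearMap_ext (φ : HilbertBasis ι ℂ H) {A B : H →L[ℂ] H}
    (h : ∀ j, A (φ j) = B (φ j)) : A = B := by
  refine ContinuousLinearMap.ext_on (s := Set.range φ) ?_ ?_
  · rw [Submodule.dense_iff_topologicalClosure_eq_top]
    exact φ.dense_span
  · rintro _ ⟨j, rfl⟩
    exact h j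

/-- Operators whose matrices in a Hilbert basis are adjoint to each other are adjoint. -/
theorem HilbertBasis.eq_adjoint_of_inner [CompleteSpace H] (φ : HilbertBasis ι ℂ H)
    {A B : H →L[ℂ] H} (h : ∀ j k, ⟪A (φ j), φ k⟫_ℂ = ⟪φ j, B (φ k)⟫_ℂ) :
    A = ContinuousLinearMap.adjoint B := by
  refine φ.continuousLinearMap_ext fun j => ?_
  apply φ.repr.injective
  ext k
  rw [φ.repr_apply_apply, φ.repr_apply_apply, ContinuousLinearMap.adjoint_inner_right,
    ← inner_conj_symm, h, inner_conj_symm]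

/-- An eigenvalue of a bounded operator lies in its spectrum. -/
theorem ContinuousLinearMap.mem_spectrum_of_apply_eq_smul {A : H →L[ℂ] H} {z : ℂ} {v : H}
    (hv : v ≠ 0) (h : A v = z • v) : z ∈ spectrum ℂ A := by
  rw [spectrum.mem_iff]
  rintro ⟨u, hu⟩
  apply hv
  have hker : (u : H →L[ℂ] H) v = 0 := by
    rw [hu]
    simp [h, Algebra.algebraMap_eq_smul_one]
  have hinv : ((↑u⁻¹ : H →L[ℂ] H) * (u : H →L[ℂ] H)) v = v := by simp
  rw [← hinv, mul_apply_eq_comp, hker, map_zero]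

/-- The spectrum of an algebra element annihilated by `(X - 1) (X - 1 + c) (X - 1 - c)`
lies in `{1 - c, 1, 1 + c}`. -/
theorem spectrum_subset_of_cube_eq {𝒜 : Type*} [Ring 𝒜] [Algebra ℂ 𝒜] {P : 𝒜} {c : ℂ}
    (hP : P ^ 3 = c ^ 2 • P) : spectrum ℂ (1 + P) ⊆ {1 - c, 1, 1 + c} := by
  nontriviality 𝒜
  intro z hz
  let p : Polynomial ℂ := (Polynomial.X - 1) ^ 3 - Polynomial.C (c ^ 2) * (Polynomial.X - 1)
  have hp : Polynomial.aeval (1 + P) p = 0 := by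
    simp [p, hP, Algebra.smul_def]
  have hmem := spectrum.subset_polynomial_aeval (1 + P) p ⟨z, hz, rfl⟩
  rw [hp, spectrum.zero_eq, Set.mem_singleton_iff] at hmem
  have hfac : (z - 1) * ((z - (1 - c)) * (z - (1 + c))) = 0 := by
    have : (z - 1) ^ 3 - c ^ 2 * (z - 1) = 0 := by simpa [p] using hmem
    linear_combination this
  rcases mul_eq_zero.mp hfac with h | h
  · exact Or.inr (Or.inl (sub_eq_zero.mp h))
  · rcases mul_eq_zero.mp h with h | h
    · exact Or.inl (sub_eq_zero.mp h)
    · exact Or.inr (Or.inr (sub_eq_zero.mp h))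

end HilbertBasisOperators

/-- The decay rate is at most `1 / 10`. -/
theorem lorentz_rate_le :
    1 / 2 - 1 / (6 * Real.sqrt 2) - (1 / 3) * Real.sqrt (7 / 16 + 1 / Real.sqrt 8) ≤ 1 / 10 := by
  have h2 : Real.sqrt 2 ≤ 3 / 2 := Real.sqrt_le_iff.mpr (by norm_num)
  have h8 : Real.sqrt 8 ≤ 3 := Real.sqrt_le_iff.mpr (by norm_num)
  have h2' : 1 / 9 ≤ 1 / (6 * Real.sqrt 2) :=
    one_div_le_one_div_of_le (by positivity) (by linarith)
  have h8' : 1 / 3 ≤ 1 / Real.sqrt 8 := one_div_le_one_div_of_le (by positivity) h8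
  have h : 87 / 100 ≤ Real.sqrt (7 / 16 + 1 / Real.sqrt 8) :=
    Real.le_sqrt_of_sq_le (by norm_num; norm_num at h8'; linarith)
  linarith

/-- The quadratic form inequality on the modes `-1, 0, 1, 2` with coordinates `u, v, w, z`. -/
theorem lorentz_form_le (c N : ℝ) (hc0 : 0 ≤ c) (hc : c ≤ 1 / 2) (u v w z : ℂ)
    (hN : ‖u‖ ^ 2 + ‖v‖ ^ 2 + ‖w‖ ^ 2 + ‖z‖ ^ 2 ≤ N) :
    1 / 5 * (N + 2 * c * (v.re * w.im - v.im * w.re)) ≤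
      2 * (N - ‖v‖ ^ 2) + 2 * c * (v.re * w.im - v.im * w.re)
        + 1 / 2 * (‖v‖ ^ 2 - ‖w‖ ^ 2)
        + 1 / 2 * (v.re * z.re + v.im * z.im) - 1 / 2 * (w.re * u.re + w.im * u.im) := by
  simp only [Complex.sq_norm, Complex.normSq_apply] at *
  have hD : 0 ≤ (v.re * v.re + v.im * v.im) / 4 + (w.re * w.re + w.im * w.im)
      + (v.re * w.im - v.im * w.re) := by
    nlinarith [sq_nonneg (v.re / 2 + w.im), sq_nonneg (v.im / 2 - w.re)]
  have hcD := mul_nonneg hc0 hD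
  have hc' : c * ((v.re * v.re + v.im * v.im) / 4 + (w.re * w.re + w.im * w.im))
      ≤ 1 / 2 * ((v.re * v.re + v.im * v.im) / 4 + (w.re * w.re + w.im * w.im)) :=
    mul_le_mul_of_nonneg_right hc (add_nonneg
      (div_nonneg (add_nonneg (mul_self_nonneg _) (mul_self_nonneg _)) zero_le_four)
      (add_nonneg (mul_self_nonneg _) (mul_self_nonneg _)))
  have hvz : 0 ≤ 1 / 10 * (v.re * v.re + v.im * v.im) + 9 / 5 * (z.re * z.re + z.im * z.im)
      + 1 / 2 * (v.re * z.re + v.im * z.im) := by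
    nlinarith [sq_nonneg (v.re + 5 / 2 * z.re), sq_nonneg (v.im + 5 / 2 * z.im),
      sq_nonneg z.re, sq_nonneg z.im]
  have hwu : 0 ≤ 1 / 2 * (w.re * w.re + w.im * w.im) + 9 / 5 * (u.re * u.re + u.im * u.im)
      - 1 / 2 * (w.re * u.re + w.im * u.im) := by
    nlinarith [sq_nonneg (w.re - 1 / 2 * u.re), sq_nonneg (w.im - 1 / 2 * u.im),
      sq_nonneg u.re, sq_nonneg u.im]
  nlinarith

open scoped InnerProductSpace

/-- on `ℓ²(ℤ)`, for the mode operator `C_n = R − J_n` of the Lorentz equation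
and the weight operator `Y_n = I ∓ (i/(2n)) E_{0,1}/E_{1,0}`, `Y_n` is self-adjoint with
spectrum `{1 − 1/(2n), 1, 1 + 1/(2n)}`, satisfies `(1 − 1/(2n))I ≤ Y_n ≤ (1 + 1/(2n))I`, and
the Lyapunov inequality `C_n* Y_n + Y_n C_n ≥ 2λ₀ Y_n` holds with
`λ₀ = 1/2 − 1/(6√2) − (1/3)√(7/16 + 1/√8)`. -/
theorem lorentz_mode_lyapunov_inequality
    {H : Type*} [NormedAddCommGroup H] [InnerProductSpace ℂ H] [CompleteSpace H]
    (φ : HilbertBasis ℤ ℂ H) (n : ℕ) (hn : 1 ≤ n)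
    (R Jn Cn Yn : H →L[ℂ] H)
    (hR : ∀ j : ℤ, R (φ j) = if j = 0 then 0 else φ j)
    (hJ : ∀ j : ℤ, Jn (φ j) = (-(Complex.I * (n : ℂ) / 2)) • (φ (j + 1) + φ (j - 1)))
    (hC : Cn = R - Jn)
    (hY : ∀ j : ℤ, Yn (φ j) = φ j
        + (if j = 1 then (-(Complex.I / (2 * (n : ℂ)))) • φ 0 else 0)
        + (if j = 0 then (Complex.I / (2 * (n : ℂ))) • φ 1 else 0)) :
    IsSelfAdjoint Yn ∧
    spectrum ℂ Yn = {((1 : ℂ) - 1 / (2 * (n : ℂ))), 1, ((1 : ℂ) + 1 / (2 * (n : ℂ)))} ∧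
    (∀ x : H, (1 - 1 / (2 * (n : ℝ))) * ‖x‖ ^ 2 ≤ (⟪Yn x, x⟫_ℂ).re ∧
        (⟪Yn x, x⟫_ℂ).re ≤ (1 + 1 / (2 * (n : ℝ))) * ‖x‖ ^ 2) ∧
    (∀ x : H,
      2 * (1 / 2 - 1 / (6 * Real.sqrt 2)
            - (1 / 3) * Real.sqrt (7 / 16 + 1 / Real.sqrt 8)) * (⟪Yn x, x⟫_ℂ).re
        ≤ (⟪(ContinuousLinearMap.adjoint Cn * Yn + Yn * Cn) x, x⟫_ℂ).re) := by
  have hn0 : (n : ℂ) ≠ 0 := by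
    exact_mod_cast Nat.one_le_iff_ne_zero.mp hn
  have horth := φ.orthonormal
  have hij : ∀ i j : ℤ, ⟪φ i, φ j⟫_ℂ = if i = j then 1 else 0 :=
    orthonormal_iff_ite.mp horth
  have hnorm : ∀ j : ℤ, ‖φ j‖ = 1 := horth.1
  have hJskew : -Jn = ContinuousLinearMap.adjoint Jn := by
    refine φ.eq_adjoint_of_inner fun j k => ?_
    simp only [neg_apply, hJ, inner_neg_left, inner_smul_left,
      inner_smul_right, inner_add_left, inner_add_right, hij]
    have h₁ : (j + 1 = k) = (j = k - 1) := by apply propext; omega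
    have h₂ : (j - 1 = k) = (j = k + 1) := by apply propext; omega
    simp only [h₁, h₂, map_neg, map_div₀, map_mul, Complex.conj_I, map_natCast,
      map_ofNat (starRingEnd ℂ) 2]
    ring
  have hRx : ∀ x, R x = x - ⟪φ 0, x⟫_ℂ • φ 0 := by
    have : R = ContinuousLinearMap.id ℂ H - (innerSL ℂ (φ 0)).smulRight (φ 0) := by
      refine φ.continuousLinearMap_ext fun j => ?_
      by_cases hj : j = 0 <;> simp [hR, hij, hj, hnorm, eq_comm]
    intro x
    simp [this]
  set P : H →L[ℂ] H := (innerSL ℂ (φ 1)).smulRight (-(Complex.I / (2 * (n : ℂ))) • φ 0)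
    + (innerSL ℂ (φ 0)).smulRight ((Complex.I / (2 * (n : ℂ))) • φ 1) with hPdef
  have hPx : ∀ x, P x = ⟪φ 1, x⟫_ℂ • (-(Complex.I / (2 * (n : ℂ))) • φ 0)
      + ⟪φ 0, x⟫_ℂ • ((Complex.I / (2 * (n : ℂ))) • φ 1) := fun x => by simp [hPdef]
  have hYP : Yn = 1 + P := by
    refine φ.continuousLinearMap_ext fun j => ?_
    rw [hY, add_apply, hPx, hij, hij]
    by_cases hj0 : j = 0 <;> by_cases hj1 : j = 1 <;> simp_all [eq_comm]
  have hYx : ∀ x, Yn x = x + (⟪φ 1, x⟫_ℂ • (-(Complex.I / (2 * (n : ℂ))) • φ 0)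
      + ⟪φ 0, x⟫_ℂ • ((Complex.I / (2 * (n : ℂ))) • φ 1)) := fun x => by
    rw [hYP, add_apply, hPx, one_apply_eq_self]
  have hcr : Complex.I / (2 * (n : ℂ)) = ((1 / (2 * (n : ℝ)) : ℝ) : ℂ) * Complex.I := by
    push_cast
    ring
  have hYsa : IsSelfAdjoint Yn := by
    rw [ContinuousLinearMap.isSelfAdjoint_iff_isSymmetric]
    intro x y
    simp only [ContinuousLinearMap.coe_coe]
    rw [hYx, hYx, hcr]
    simp only [inner_add_left, inner_add_right, inner_smul_left, inner_smul_right,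
      inner_conj_symm, map_neg, map_mul, Complex.conj_ofReal, Complex.conj_I]
    ring
  have hP0 : P (φ 0) = (Complex.I / (2 * (n : ℂ))) • φ 1 := by simp [hPx, hij, hnorm]
  have hP1 : P (φ 1) = -(Complex.I / (2 * (n : ℂ))) • φ 0 := by simp [hPx, hij, hnorm]
  have hP3 : P ^ 3 = (1 / (2 * (n : ℂ))) ^ 2 • P := by
    ext x
    simp only [pow_succ, pow_zero, one_mul, mul_apply_eq_comp, smul_apply]
    rw [hPx x]
    simp only [map_add, map_smul, hP0, hP1, smul_smul, smul_add]
    congr 2 <;> ring_nf <;> simp <;> ring_nf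
  have heig : ∀ s : ℂ, s ^ 2 = -1 →
      1 - Complex.I * s / (2 * (n : ℂ)) ∈ spectrum ℂ Yn := by
    intro s hs
    refine ContinuousLinearMap.mem_spectrum_of_apply_eq_smul (v := φ 0 + s • φ 1) ?_ ?_
    · intro h
      have := congrArg (fun y => ⟪φ 0, y⟫_ℂ) h
      simp [hij, horth.ne_zero 0] at this
    · have hP0s : P (φ 0) = (-(Complex.I * s / (2 * (n : ℂ))) * s) • φ 1 := by
        rw [hP0]
        congr 1
        linear_combination (Complex.I / (2 * (n : ℂ))) * hs
      rw [hYP, add_apply, one_apply_eq_self, map_add, map_smul, hP0s, hP1]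
      module
  have hspec : spectrum ℂ Yn =
      {((1 : ℂ) - 1 / (2 * (n : ℂ))), 1, ((1 : ℂ) + 1 / (2 * (n : ℂ)))} := by
    apply Set.Subset.antisymm
    · rw [hYP]
      exact spectrum_subset_of_cube_eq hP3
    · rintro z (rfl | rfl | rfl)
      · have := heig (-Complex.I) (by simp)
        simpa using this
      · refine ContinuousLinearMap.mem_spectrum_of_apply_eq_smul (v := φ 2)
          (horth.ne_zero 2) ?_
        rw [hY]
        simp
      · have := heig Complex.I (by simp)
        simpa [neg_div] using this
  have hbessel : ∀ x, ‖⟪φ (-1), x⟫_ℂ‖ ^ 2 + ‖⟪φ 0, x⟫_ℂ‖ ^ 2 + ‖⟪φ 1, x⟫_ℂ‖ ^ 2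
      + ‖⟪φ 2, x⟫_ℂ‖ ^ 2 ≤ ‖x‖ ^ 2 := by
    intro x
    have := horth.sum_inner_products_le x (s := ({-1, 0, 1, 2} : Finset ℤ))
    simpa [add_assoc] using this
  have hc0 : 0 ≤ 1 / (2 * (n : ℝ)) := by positivity
  have hc : 1 / (2 * (n : ℝ)) ≤ 1 / 2 := by
    have : (1 : ℝ) ≤ n := by exact_mod_cast hn
    exact one_div_le_one_div_of_le (by norm_num) (by linarith)
  have hYform : ∀ x, (⟪Yn x, x⟫_ℂ).re = ‖x‖ ^ 2 + 2 * (1 / (2 * (n : ℝ))) *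
      ((⟪φ 0, x⟫_ℂ).re * (⟪φ 1, x⟫_ℂ).im - (⟪φ 0, x⟫_ℂ).im * (⟪φ 1, x⟫_ℂ).re) := by
    intro x
    rw [hYx, hcr]
    simp only [inner_add_left, inner_smul_left, inner_self_eq_norm_sq_to_K]
    generalize ⟪φ 0, x⟫_ℂ = v
    generalize ⟪φ 1, x⟫_ℂ = w
    generalize 1 / (2 * (n : ℝ)) = c
    simp [← Complex.ofReal_pow]
    ring
  have hbounds : ∀ x : H, (1 - 1 / (2 * (n : ℝ))) * ‖x‖ ^ 2 ≤ (⟪Yn x, x⟫_ℂ).re ∧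
      (⟪Yn x, x⟫_ℂ).re ≤ (1 + 1 / (2 * (n : ℝ))) * ‖x‖ ^ 2 := by
    intro x
    rw [hYform]
    have hb := hbessel x
    generalize ⟪φ 0, x⟫_ℂ = v at *
    generalize ⟪φ 1, x⟫_ℂ = w at *
    generalize 1 / (2 * (n : ℝ)) = c at *
    have hvw : |2 * (v.re * w.im - v.im * w.re)| ≤ ‖x‖ ^ 2 := by
      rw [Complex.sq_norm v, Complex.sq_norm w, Complex.normSq_apply, Complex.normSq_apply] at hb
      rw [abs_le]
      constructor <;>
        nlinarith [sq_nonneg (v.im + w.re), sq_nonneg (v.re - w.im), sq_nonneg (v.im - w.re),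
          sq_nonneg (v.re + w.im), sq_nonneg ‖⟪φ (-1), x⟫_ℂ‖, sq_nonneg ‖⟪φ 2, x⟫_ℂ‖]
    have hlo := mul_le_mul_of_nonneg_left (abs_le.mp hvw).1 hc0
    have hhi := mul_le_mul_of_nonneg_left (abs_le.mp hvw).2 hc0
    constructor <;> linarith
  refine ⟨hYsa, hspec, hbounds, fun x => ?_⟩
  have hYnonneg : 0 ≤ (⟪Yn x, x⟫_ℂ).re :=
    le_trans (mul_nonneg (by linarith) (sq_nonneg _)) (hbounds x).1
  have hrate := mul_le_mul_of_nonneg_right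
    (mul_le_mul_of_nonneg_left lorentz_rate_le (zero_le_two (α := ℝ))) hYnonneg
  refine hrate.trans ?_
  have hJadj : ∀ y z, ⟪y, Jn z⟫_ℂ = -⟪Jn y, z⟫_ℂ := fun y z => by
    rw [← ContinuousLinearMap.adjoint_inner_left, ← hJskew, neg_apply,
      inner_neg_left]
  have hJre : (⟪Jn x, x⟫_ℂ).re = 0 := by
    have h := congrArg Complex.re (hJadj x x)
    rw [← inner_conj_symm, Complex.conj_re, Complex.neg_re] at h
    linarith
  have hcoord : ∀ k : ℤ, ⟪Jn x, φ k⟫_ℂ = (((n : ℝ) / 2 : ℝ) : ℂ) * Complex.I *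
      (starRingEnd ℂ) (⟪φ (k + 1), x⟫_ℂ + ⟪φ (k - 1), x⟫_ℂ) := by
    intro k
    rw [← inner_conj_symm, hJadj, hJ, inner_smul_left, inner_add_left]
    simp only [map_neg, map_div₀, map_mul, map_add, Complex.conj_I, map_natCast,
      map_ofNat (starRingEnd ℂ) 2]
    push_cast
    ring
  have hform : (⟪(ContinuousLinearMap.adjoint Cn * Yn + Yn * Cn) x, x⟫_ℂ).re
      = 2 * (⟪Cn x, Yn x⟫_ℂ).re := by
    have hsymm : ⟪Yn (Cn x), x⟫_ℂ = ⟪Cn x, Yn x⟫_ℂ :=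
      (ContinuousLinearMap.isSelfAdjoint_iff_isSymmetric.mp hYsa) (Cn x) x
    rw [add_apply, inner_add_left, mul_apply_eq_comp, mul_apply_eq_comp,
      ContinuousLinearMap.adjoint_inner_left, hsymm, Complex.add_re,
      ← inner_conj_symm (Yn x), Complex.conj_re]
    ring
  have hCY : (⟪Cn x, Yn x⟫_ℂ).re = ‖x‖ ^ 2 - ‖⟪φ 0, x⟫_ℂ‖ ^ 2
      + 1 / (2 * (n : ℝ)) *
        ((⟪φ 0, x⟫_ℂ).re * (⟪φ 1, x⟫_ℂ).im - (⟪φ 0, x⟫_ℂ).im * (⟪φ 1, x⟫_ℂ).re)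
      + 1 / 4 * (‖⟪φ 0, x⟫_ℂ‖ ^ 2 - ‖⟪φ 1, x⟫_ℂ‖ ^ 2)
      + 1 / 4 * ((⟪φ 0, x⟫_ℂ).re * (⟪φ 2, x⟫_ℂ).re + (⟪φ 0, x⟫_ℂ).im * (⟪φ 2, x⟫_ℂ).im)
      - 1 / 4 * ((⟪φ 1, x⟫_ℂ).re * (⟪φ (-1), x⟫_ℂ).re
        + (⟪φ 1, x⟫_ℂ).im * (⟪φ (-1), x⟫_ℂ).im) := by
    have hxk : ∀ k, ⟪x, φ k⟫_ℂ = (starRingEnd ℂ) ⟪φ k, x⟫_ℂ := fun k => (inner_conj_symm _ _).symm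
    have hnr : (1 / (2 * (n : ℝ))) * (n / 2) = 1 / 4 := by
      have : (n : ℝ) ≠ 0 := by exact_mod_cast hn0
      field_simp
      norm_num
    have hJ0 := hcoord 0
    have hJ1 := hcoord 1
    norm_num only at hJ0 hJ1
    rw [hC, sub_apply, hRx, hYx, hcr]
    simp only [inner_add_right, inner_sub_left, inner_smul_left, inner_smul_right, hij,
      inner_self_eq_norm_sq_to_K, hJ0, hJ1, hxk, Complex.add_re, Complex.sub_re, hJre]
    generalize ⟪φ 0, x⟫_ℂ = v
    generalize ⟪φ 1, x⟫_ℂ = w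
    generalize ⟪φ 2, x⟫_ℂ = z
    generalize ⟪φ (-1), x⟫_ℂ = u
    generalize 1 / (2 * (n : ℝ)) = c at *
    generalize (n : ℝ) / 2 = m at *
    simp [← Complex.ofReal_pow, Complex.sq_norm, Complex.normSq_apply]
    linear_combination (v.re * v.re + v.im * v.im - (w.re * w.re + w.im * w.im)
      + (v.re * z.re + v.im * z.im) - (w.re * u.re + w.im * u.im)) * hnr
  rw [hform, hCY, hYform]
  have := lorentz_form_le (1 / (2 * (n : ℝ))) (‖x‖ ^ 2) hc0 hc ⟪φ (-1), x⟫_ℂ ⟪φ 0, x⟫_ℂ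
    ⟪φ 1, x⟫_ℂ ⟪φ 2, x⟫_ℂ (hbessel x)
  linarith
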